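/- Let H be a well-formed history and let lt assign to each event of H a key (logical time, process identifier) ∈ ℕ × ℕ, where the process identifier component equals the process at which the event occurs, such that distinct events receive distinct keys and, within each process subhistory H|p, the logical-time components are strictly increasing along the subhistory. Let H^lt be the sequence consisting of the same events as H, sorted in increasing lexicographic order of their keys. Then H^lt|p = H|p for every process p; in particular H ≃ H^lt. -/

import Mathlib

/-- An event of a read/write register operation execution: it is either the
invocation (`isInv = true`) or the response (`isInv = false`) of an operation,
identified by an operation identifier `op`, occurring at process `proc`,
targeting register `reg`.  `isRead` tells whether the operation is a read or a
write, and `value` is the value written (for a write) resp. returned (for a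
read). -/
structure Event where
  op : ℕ
  proc : ℕ
  reg : ℕ
  isRead : Bool
  value : ℤ
  isInv : Bool
deriving DecidableEq

/-- A history is a finite sequence of events. -/
abbrev Hist := List Event

/-- `H|p`: the process subhistory of `H`, i.e. the subsequence of events
occurring at process `p`. -/
def procSub (H : Hist) (p : ℕ) : Hist := H.filter (fun e => e.proc = p)

/-- `H|x`: the register subhistory of `H`, i.e. the subsequence of events of
operations targeting register `x`. -/
def regSub (H : Hist) (x : ℕ) : Hist := H.filter (fun e => e.reg = x)

/-- `e2` is the response event matching the invocation event `e1`. -/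
def Matches (e1 e2 : Event) : Prop :=
  e1.isInv = true ∧ e2.isInv = false ∧ e1.op = e2.op ∧ e1.proc = e2.proc ∧
    e1.reg = e2.reg ∧ e1.isRead = e2.isRead ∧ e1.value = e2.value

/-- A history is sequential if its first event is an invocation and every
invocation event (except possibly the last event) is immediately followed by
the matching response event. -/
inductive IsSequential : Hist → Prop
  | nil : IsSequential []
  | single (e : Event) : e.isInv = true → IsSequential [e]
  | cons (e1 e2 : Event) (rest : Hist) :
      Matches e1 e2 → IsSequential rest → IsSequential (e1 :: e2 :: rest)

/-- No two distinct events of a history are the invocation of the same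
operation, nor the response of the same operation. -/
def UniqueEvents (H : Hist) : Prop :=
  H.Pairwise (fun e1 e2 => ¬(e1.op = e2.op ∧ e1.isInv = e2.isInv))

/-- All events of one and the same operation agree on the process, register,
operation type and value. -/
def Coherent (H : Hist) : Prop :=
  ∀ e1 ∈ H, ∀ e2 ∈ H, e1.op = e2.op →
    e1.proc = e2.proc ∧ e1.reg = e2.reg ∧ e1.isRead = e2.isRead ∧ e1.value = e2.value

/-- A history is well-formed if every process subhistory is sequential
(together with the bookkeeping conditions making operations well-defined). -/
def WellFormed (H : Hist) : Prop :=
  UniqueEvents H ∧ Coherent H ∧ ∀ p : ℕ, IsSequential (procSub H p)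

/-- A history is complete if every invocation event has a matching response
event. -/
def Complete (H : Hist) : Prop :=
  ∀ e ∈ H, e.isInv = true → ∃ e' ∈ H, Matches e e'

/-- `H ≃ H'`: two histories are equivalent iff `H|p = H'|p` for every
process `p`. -/
def HEquiv (H H' : Hist) : Prop := ∀ p : ℕ, procSub H p = procSub H' p

/-- Operation `o1` precedes operation `o2` in history `H`
(`o1 <_H o2`): the response event of `o1` occurs before the invocation event
of `o2` in `H`. -/
def OpBefore (H : Hist) (o1 o2 : ℕ) : Prop :=
  ∃ i j : Fin H.length, i < j ∧
    (H.get i).op = o1 ∧ (H.get i).isInv = false ∧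
    (H.get j).op = o2 ∧ (H.get j).isInv = true

/-- A sequential history is legal if every read of a register returns the
value written by the closest preceding write to that register, or the initial
value `0` if no such write exists. -/
def Legal (S : Hist) : Prop :=
  ∀ k : Fin S.length, (S.get k).isInv = true → (S.get k).isRead = true →
    ((∃ j : Fin S.length, j < k ∧ (S.get j).isInv = true ∧ (S.get j).isRead = false ∧
        (S.get j).reg = (S.get k).reg ∧ (S.get j).value = (S.get k).value ∧
        ∀ l : Fin S.length, j < l → l < k → (S.get l).isInv = true →
          (S.get l).isRead = false → (S.get l).reg ≠ (S.get k).reg) ∨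
      ((S.get k).value = 0 ∧
        ∀ j : Fin S.length, j < k → (S.get j).isInv = true →
          (S.get j).isRead = false → (S.get j).reg ≠ (S.get k).reg))

/-- `SC H`: history `H` is sequentially consistent iff there is a legal
sequential history `S` with `S ≃ H`. -/
def SC (H : Hist) : Prop :=
  ∃ S : Hist, IsSequential S ∧ Legal S ∧ HEquiv S H

/-- `LIN H`: history `H` is linearizable iff there is a legal sequential
history `S` with `S ≃ H` such that `o1 <_H o2` implies `o1 <_S o2` for all
operations `o1, o2` of `H`. -/
def LIN (H : Hist) : Prop :=
  ∃ S : Hist, IsSequential S ∧ Legal S ∧ HEquiv S H ∧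
    ∀ o1 o2 : ℕ, OpBefore H o1 o2 → OpBefore S o1 o2

/-- The lexicographic order on keys `(logical time, process identifier)`. -/
def KeyLt (k1 k2 : ℕ × ℕ) : Prop := Prod.Lex (· < ·) (· < ·) k1 k2

/-- `IsLtHistory H lt Hlt`: `Hlt` is the logical-time history `H^lt`
corresponding to `H`, i.e. the sequence consisting of the same events as `H`,
sorted in increasing lexicographic order of their keys
`lt e = (logical time of e, process identifier of e)`. -/
def IsLtHistory (H : Hist) (lt : Event → ℕ × ℕ) (Hlt : Hist) : Prop :=
  Hlt.Perm H ∧ Hlt.Pairwise (fun e1 e2 => KeyLt (lt e1) (lt e2))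

theorem eq_of_perm_of_pairwise_lt_of_pairwise_le {α β : Type*} [PartialOrder β] {f : α → β}
    {l₁ l₂ : List α} (hperm : l₁.Perm l₂) (hlt : l₁.Pairwise fun a b => f a < f b)
    (hle : l₂.Pairwise fun a b => f a ≤ f b) : l₁ = l₂ := by
  -- `f` separates the common elements of the two lists, so weak sortedness determines the order.
  have hnodup : (l₁.map f).Nodup := List.pairwise_map.2 (hlt.imp ne_of_lt)
  refine hperm.eq_of_pairwise (fun a b ha hb hab hba => ?_) (hlt.imp le_of_lt) hle
  exact List.inj_on_of_nodup_map hnodup ha (hperm.mem_iff.2 hb) (le_antisymm hab hba)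

theorem prodLex_iff_of_snd_eq {α β : Type*} {r : α → α → Prop} {s : β → β → Prop} [Std.Irrefl s]
    {a b : α × β} (h : a.2 = b.2) : Prod.Lex r s a b ↔ r a.1 b.1 := by
  simp [Prod.lex_def, h, irrefl_of s b.2]

theorem mem_procSub {H : Hist} {p : ℕ} {e : Event} : e ∈ procSub H p ↔ e ∈ H ∧ e.proc = p := by
  simp [procSub]

namespace IsLtHistory

variable {H Hlt : Hist} {lt : Event → ℕ × ℕ}

theorem procSub_perm (hlt : IsLtHistory H lt Hlt) (p : ℕ) :
    (procSub Hlt p).Perm (procSub H p) :=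
  hlt.1.filter _

theorem pairwise_time_lt_procSub (hlt : IsLtHistory H lt Hlt)
    (hproc : ∀ e ∈ H, (lt e).2 = e.proc) (p : ℕ) :
    (procSub Hlt p).Pairwise fun e₁ e₂ => (lt e₁).1 < (lt e₂).1 := by
  have hsnd : ∀ e ∈ procSub Hlt p, (lt e).2 = p := fun e he => by
    obtain ⟨heH, hep⟩ := mem_procSub.1 ((hlt.procSub_perm p).mem_iff.1 he)
    exact (hproc e heH).trans hep
  have hkey : (procSub Hlt p).Pairwise fun e₁ e₂ => KeyLt (lt e₁) (lt e₂) := hlt.2.filter _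
  exact hkey.imp_of_mem fun h₁ h₂ h =>
    (prodLex_iff_of_snd_eq ((hsnd _ h₁).trans (hsnd _ h₂).symm)).1 h

end IsLtHistory

theorem lt_history_equiv_general {H Hlt : Hist} {lt : Event → ℕ × ℕ}
    (hproc : ∀ e ∈ H, (lt e).2 = e.proc)
    (hmono : ∀ p : ℕ, (procSub H p).Pairwise fun e₁ e₂ => (lt e₁).1 ≤ (lt e₂).1)
    (hlt : IsLtHistory H lt Hlt) : HEquiv H Hlt := fun p =>
  (eq_of_perm_of_pairwise_lt_of_pairwise_le (hlt.procSub_perm p)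
    (hlt.pairwise_time_lt_procSub hproc p) (hmono p)).symm

/-- Let `H` be a well-formed history and let `lt` assign to each
event of `H` a key (logical time, process identifier) whose second component
equals the process at which the event occurs, such that distinct events
receive distinct keys and, within each process subhistory `H|p`, the
logical-time components are strictly increasing along the subhistory.  Let
`H^lt` be the sequence consisting of the same events as `H` sorted in
increasing lexicographic order of their keys.  Then `H^lt|p = H|p` for every
process `p`; in particular `H ≃ H^lt`. -/
theorem lt_history_equiv (H : Hist) (hwf : WellFormed H)
    (lt : Event → ℕ × ℕ)
    (hproc : ∀ e ∈ H, (lt e).2 = e.proc)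
    (hdist : H.Pairwise (fun e1 e2 => lt e1 ≠ lt e2))
    (hmono : ∀ p : ℕ, (procSub H p).Pairwise (fun e1 e2 => (lt e1).1 < (lt e2).1))
    (Hlt : Hist) (hlt : IsLtHistory H lt Hlt) :
    (∀ p : ℕ, procSub Hlt p = procSub H p) ∧ HEquiv H Hlt := by
  have hequiv : HEquiv H Hlt :=
    lt_history_equiv_general hproc (fun p => (hmono p).imp le_of_lt) hlt
  exact ⟨fun p => (hequiv p).symm, hequiv⟩
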